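/- Assume that (e_1, ..., e_n) is a fan of a 3-connected matroid M, and that 4 <= |E(M)| <= n + 1. Then M is a wheel or a whirl. -/

import Mathlib

/-!
Let `λ(X) = r(X) + r(E - X) - r(M)`, which is invariant under complements and duality. An initial
segment of a fan has `λ ≤ 2`, since each new element completes a triangle or a triad. If the fan
misses exactly one element, its last two elements and the missing one form the complement `T` of an
initial segment, so `λ(T) ≤ 2`; by 3-connectedness `T` is a triangle or a triad, and orthogonality
forces the type that continues the fan. So the fan can be extended to the whole ground set, and
then rotated: drop the first element and append it at the end. All cyclically consecutive triples
are therefore alternately triangles and triads, whence the length is even and `E` is a cycle of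
spokes and rim elements.

Orthogonality with the triads shows that a circuit missing part of the rim contains, with each
maximal run of rim elements, the two spokes bounding it, and the triangles show that such a run and
its two spokes form a circuit. Besides these, only the rim and the rim with one spoke can be
circuits; the matroid is a wheel or a whirl according to whether the rim is dependent or not.
-/

open Matroid Set

universe u

variable {α : Type u}

namespace PaperDefs

/-- Deletion of a set of elements from a matroid. -/
def mdel (M : Matroid α) (D : Set α) : Matroid α := M ↾ (M.E \ D)

/-- Contraction of a set of elements in a matroid. -/
def mcon (M : Matroid α) (C : Set α) : Matroid α := (mdel M✶ C)✶

/-- A circuit: a minimal dependent set. -/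
def IsCircuit (M : Matroid α) (C : Set α) : Prop :=
  M.Dep C ∧ ∀ X, X ⊂ C → M.Indep X

/-- A triangle: a 3-element circuit. -/
def IsTriangle (M : Matroid α) (T : Set α) : Prop :=
  IsCircuit M T ∧ T.encard = 3

/-- A triad: a 3-element cocircuit. -/
def IsTriad (M : Matroid α) (T : Set α) : Prop := IsTriangle M✶ T

/-- The (extended natural number) rank of a set in a matroid: the supremum of the
cardinalities of its independent subsets. -/
noncomputable def erk (M : Matroid α) (X : Set α) : ℕ∞ :=
  ⨆ I ∈ {I : Set α | M.Indep I ∧ I ⊆ X}, I.encard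

/-- Two elements are connected if they are equal or lie in a common circuit. -/
def ConnTo (M : Matroid α) (e f : α) : Prop :=
  (e = f ∧ e ∈ M.E) ∨ ∃ C, IsCircuit M C ∧ e ∈ C ∧ f ∈ C

/-- A matroid is connected if its ground set is nonempty and every two of its elements
are connected. -/
def Conn (M : Matroid α) : Prop :=
  M.E.Nonempty ∧ ∀ e ∈ M.E, ∀ f ∈ M.E, ConnTo M e f

/-- A 2-separation of a matroid: a partition `(X, Y)` of the ground set with both sides
of size at least two and `r(X) + r(Y) - r(M) ≤ 1`. -/
def TwoSep (M : Matroid α) (X Y : Set α) : Prop :=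
  X ∪ Y = M.E ∧ Disjoint X Y ∧ 2 ≤ X.encard ∧ 2 ≤ Y.encard ∧
    erk M X + erk M Y ≤ erk M M.E + 1

/-- A matroid is 3-connected if it is connected and has no 2-separation. -/
def ThreeConn (M : Matroid α) : Prop :=
  Conn M ∧ ∀ X Y, ¬ TwoSep M X Y

/-- A matroid is 3-connected up to series and parallel sets if it is connected and, for
every 2-separation `(X, Y)`, `min {r X, r Y} = 1` or `min {r✶ X, r✶ Y} = 1`. -/
def ThreeConnUpToSP (M : Matroid α) : Prop :=
  Conn M ∧ ∀ X Y, TwoSep M X Y →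
    min (erk M X) (erk M Y) = 1 ∨ min (erk M✶ X) (erk M✶ Y) = 1

/-- `N` is a minor of `M`: it is obtained from `M` by contracting a set `C` and deleting
a disjoint set `D`. -/
def IsMinor (N M : Matroid α) : Prop :=
  ∃ C D, C ⊆ M.E ∧ D ⊆ M.E ∧ Disjoint C D ∧ N = mdel (mcon M C) D

/-- `M` is isomorphic to `N`: there is a bijection between the ground sets under which
independence corresponds. -/
def IsoTo (M N : Matroid α) : Prop :=
  ∃ f : α → α, Set.BijOn f M.E N.E ∧ ∀ I, I ⊆ M.E → (M.Indep I ↔ N.Indep (f '' I))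

/-- The cyclic interval `{i, i+1, ..., j-1}` in `ZMod r`. -/
def cycArc (r : ℕ) (i j : ZMod r) : Set (ZMod r) :=
  {k | ∃ m : ℕ, m < (j - i).val ∧ k = i + (m : ZMod r)}

/-- `M` is (isomorphic to) a rank-`r` wheel for some `r ≥ 2`, i.e. the cycle matroid of
the wheel graph with `r` spokes: there is a labelling of the ground set by spokes `s i`
and rim elements `w i` so that the circuits of `M` are precisely the rim together with
the sets consisting of two spokes and the rim elements of one of the two arcs joining
them. -/
def IsWheel (M : Matroid α) : Prop :=
  ∃ r : ℕ, 2 ≤ r ∧ ∃ s w : ZMod r → α,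
    Function.Injective (Sum.elim s w) ∧
    M.E = Set.range s ∪ Set.range w ∧
    ∀ C, IsCircuit M C ↔
      (C = Set.range w ∨
        ∃ i j : ZMod r, i ≠ j ∧ C = {s i, s j} ∪ w '' cycArc r i j)

/-- `M` is (isomorphic to) a rank-`r` whirl for some `r ≥ 2`: obtained from the rank-`r`
wheel by relaxing the rim circuit; its circuits are the two-spokes-plus-arc circuits of
the wheel together with the sets consisting of the whole rim and a single spoke. -/
def IsWhirl (M : Matroid α) : Prop :=
  ∃ r : ℕ, 2 ≤ r ∧ ∃ s w : ZMod r → α,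
    Function.Injective (Sum.elim s w) ∧
    M.E = Set.range s ∪ Set.range w ∧
    ∀ C, IsCircuit M C ↔
      ((∃ i : ZMod r, C = insert (s i) (Set.range w)) ∨
        ∃ i j : ZMod r, i ≠ j ∧ C = {s i, s j} ∪ w '' cycArc r i j)

/-- A triangle if `b = true`, a triad if `b = false`. -/
def TriOrTriad (M : Matroid α) (b : Bool) (T : Set α) : Prop :=
  cond b (IsTriangle M T) (IsTriad M T)

/-- The alternation pattern of a fan, recorded as a list: position `i` (zero-based)
carries a spoke element iff `fanBool b i = true`, where `b` records whether the first
triple of the fan is a triangle. -/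
def fanBool (b : Bool) (i : ℕ) : Bool := if i % 2 = 0 then b else !b

/-- `F` is a fan of `M` whose first triple is a triangle if `b = true` (so that the
first element is a spoke element) and a triad if `b = false`: a list of at least three
distinct elements of the ground set in which every three consecutive elements form
alternately triangles and triads. -/
def IsFanWith (M : Matroid α) (b : Bool) (F : List α) : Prop :=
  3 ≤ F.length ∧ F.Nodup ∧ (∀ x ∈ F, x ∈ M.E) ∧
  ∀ (l₁ : List α) (x y z : α) (l₂ : List α), F = l₁ ++ x :: y :: z :: l₂ →
    TriOrTriad M (fanBool b l₁.length) {x, y, z}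

/-- `F` is a fan of `M`. -/
def IsFan (M : Matroid α) (F : List α) : Prop := ∃ b, IsFanWith M b F

/-- `F` is consistent with `F'`: `F` is a (not necessarily contiguous) subsequence of
`F'` or of its reversal. -/
def Consistent (F F' : List α) : Prop := F.Sublist F' ∨ F.Sublist F'.reverse

/-- A finite family of lists is pairwise disjoint. -/
def PairwiseDisjointLists (𝓕 : Finset (List α)) : Prop :=
  ∀ F ∈ 𝓕, ∀ G ∈ 𝓕, F ≠ G → ∀ x ∈ F, x ∉ G

/-- `𝓕` is a covering family of `M'` relative to `N` and `FN`: a family of pairwise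
disjoint fans of `M'`, of the same size as `FN`, such that every fan of `FN` is
consistent with a member of `𝓕` and every element of `E(M') - E(N)` lies in a member
of `𝓕`. -/
def CoveringFamily (N : Matroid α) (FN : Finset (List α)) (M' : Matroid α)
    (𝓕 : Finset (List α)) : Prop :=
  (∀ F ∈ 𝓕, IsFan M' F) ∧ PairwiseDisjointLists 𝓕 ∧ 𝓕.card = FN.card ∧
  (∀ F ∈ FN, ∃ F' ∈ 𝓕, Consistent F F') ∧
  (∀ x ∈ M'.E \ N.E, ∃ F ∈ 𝓕, x ∈ F)

/-- `M` is obtained from `M'` by a fan-lengthening move on the fan `F₀` of `M'`,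
producing the fan `F` of `M`: either `M' = M \ e₁` where `e₁` is a terminal spoke
element of `F`, or `M' = M / e₁` where `e₁` is a terminal rim element of `F`, or
(when `F` has at least five elements) `M' = M / eᵢ \ eᵢ₊₁` for a rim element `eᵢ`
of `F` with `1 ≤ i ≤ n - 1`; in each case `M` and `M'` are 3-connected and `F₀` is
the corresponding shortened fan. -/
def FanLengthen (M' M : Matroid α) (F₀ F : List α) : Prop :=
  ThreeConn M ∧ 4 ≤ F.length ∧ IsFan M' F₀ ∧
  ∃ b, IsFanWith M b F ∧
    ((∃ e F', F = e :: F' ∧ b = true ∧ M' = mdel M {e} ∧ ThreeConn M' ∧ F₀ = F') ∨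
     (∃ e F', F = e :: F' ∧ b = false ∧ M' = mcon M {e} ∧ ThreeConn M' ∧ F₀ = F') ∨
     (5 ≤ F.length ∧ ∃ (l₁ : List α) (x y : α) (l₂ : List α),
        F = l₁ ++ x :: y :: l₂ ∧ fanBool b l₁.length = false ∧
        M' = mdel (mcon M {x}) {y} ∧ ThreeConn M' ∧ F₀ = l₁ ++ l₂))

/-- The fan-extensions of `N` relative to the family `FN` of fans of `N`: the smallest
collection of matroids containing `N` and closed under fan-lengthening moves performed
on fans belonging to covering families. -/
inductive FanExt (N : Matroid α) (FN : Finset (List α)) : Matroid α → Prop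
  | base : FanExt N FN N
  | step (M' M : Matroid α) (𝓕 : Finset (List α)) (F₀ F : List α) :
      FanExt N FN M' → CoveringFamily N FN M' 𝓕 → F₀ ∈ 𝓕 →
      FanLengthen M' M F₀ F → FanExt N FN M

/-- The covering family `𝓕` of `M` admits a fan-shortening move: there are a matroid
`M'` having `N` as a minor and a fan `F₀` of `M'` such that `M` is obtained from `M'`
by a fan-lengthening move on `F₀` producing a fan that belongs to `𝓕`. -/
def AdmitsFanShortening (N M : Matroid α) (𝓕 : Finset (List α)) : Prop :=
  ∃ (M' : Matroid α) (F₀ F : List α), IsMinor N M' ∧ F ∈ 𝓕 ∧ FanLengthen M' M F₀ F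

/-- The alternation pattern of a fan presented as a function with one-based indices:
position `i` carries a spoke element iff `posBool b i = true`, where `b` records
whether the first triple of the fan is a triangle. -/
def posBool (b : Bool) (i : ℕ) : Bool := if i % 2 = 1 then b else !b

/-- `(e 1, ..., e n)` is a fan of `M` whose first triple is a triangle if `b = true`
(so that `e 1` is a spoke element) and a triad if `b = false`: at least three distinct
elements of the ground set in which every three consecutive elements form alternately
triangles and triads. -/
def IsFanFun (M : Matroid α) (b : Bool) (n : ℕ) (e : ℕ → α) : Prop :=
  3 ≤ n ∧ (∀ i j, 1 ≤ i → i ≤ n → 1 ≤ j → j ≤ n → e i = e j → i = j) ∧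
  (∀ i, 1 ≤ i → i ≤ n → e i ∈ M.E) ∧
  ∀ i, 1 ≤ i → i + 2 ≤ n → TriOrTriad M (posBool b i) {e i, e (i+1), e (i+2)}

/-- The set of elements of the fan `(e 1, ..., e n)`. -/
def fanSet (n : ℕ) (e : ℕ → α) : Set α := {a | ∃ i, 1 ≤ i ∧ i ≤ n ∧ a = e i}

/-- The set of rim elements of the fan `(e 1, ..., e n)` with alternation pattern `b`. -/
def rimSet (b : Bool) (n : ℕ) (e : ℕ → α) : Set α :=
  {a | ∃ i, 1 ≤ i ∧ i ≤ n ∧ posBool b i = false ∧ a = e i}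

/-- `M` is representable over the field `𝔽`. -/
def RepOver (M : Matroid α) (𝔽 : Type*) [Field 𝔽] : Prop :=
  ∃ f : α → (α → 𝔽),
    ∀ I : Set α, I ⊆ M.E → (M.Indep I ↔ LinearIndependent 𝔽 (fun x : I => f (x : α)))

/-- `M` has a minor isomorphic to a member of `𝓢`. -/
def HasSMinor (𝓢 : Set (Matroid α)) (M : Matroid α) : Prop :=
  ∃ S ∈ 𝓢, ∃ N, IsMinor N M ∧ IsoTo N S

/-- `M` is `𝓢`-fragile: for every element `e` of `M`, at least one of `M \ e` and
`M / e` has no `𝓢`-minor. -/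
def SFragile (𝓢 : Set (Matroid α)) (M : Matroid α) : Prop :=
  ∀ e ∈ M.E, ¬ HasSMinor 𝓢 (mdel M {e}) ∨ ¬ HasSMinor 𝓢 (mcon M {e})

end PaperDefs

open PaperDefs

namespace PaperDefs

section Rank

/-- The rank of a set as a natural number; it is meaningful only where the rank is finite. -/
noncomputable def rk (M : Matroid α) (X : Set α) : ℕ := (M.eRk X).toNat

variable {M : Matroid α} {X Y : Set α} {x y z : α}

lemma erk_eq_eRk (M : Matroid α) (X : Set α) : erk M X = M.eRk X := by
  apply le_antisymm
  · exact iSup₂_le fun I hI => hI.1.encard_le_eRk_of_subset hI.2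
  · obtain ⟨I, hIX, hI, hcard⟩ := le_eRk_iff.1 (le_refl (M.eRk X))
    exact hcard ▸ le_iSup₂ (f := fun I (_ : I ∈ {I | M.Indep I ∧ I ⊆ X}) => I.encard) I ⟨hI, hIX⟩

lemma isCircuit_iff (M : Matroid α) (C : Set α) : IsCircuit M C ↔ M.IsCircuit C :=
  Matroid.isCircuit_iff_forall_ssubset.symm

lemma rk_insert_of_mem_closure (hz : z ∈ M.closure X) : rk M (insert z X) = rk M X := by
  rw [rk, ← M.eRk_closure_eq, closure_insert_eq_of_mem_closure hz, M.eRk_closure_eq, rk]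

lemma mem_closure_of_isCircuit_triple (h : M.IsCircuit {x, y, z}) (hx : x ∈ M.closure X)
    (hy : y ∈ M.closure X) : z ∈ M.closure X := by
  refine M.closure_subset_closure_of_subset_closure ?_
    (h.mem_closure_sdiff_singleton_of_mem (e := z) (by simp))
  rintro a ⟨rfl | rfl | rfl, ha⟩
  exacts [hx, hy, absurd rfl ha]

variable [M.Finite]

lemma coe_rk (M : Matroid α) [M.Finite] (X : Set α) : (rk M X : ℕ∞) = M.eRk X :=
  ENat.natCast_toNat (eRk_ne_top_iff.2 (M.isRkFinite_set X))

lemma rk_mono (h : X ⊆ Y) : rk M X ≤ rk M Y := by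
  exact_mod_cast (coe_rk M X).trans_le ((M.eRk_mono h).trans_eq (coe_rk M Y).symm)

lemma rk_insert_le (M : Matroid α) [M.Finite] (z : α) (X : Set α) :
    rk M (insert z X) ≤ rk M X + 1 := by
  have := M.eRk_insert_le_add_one z X
  rw [← coe_rk, ← coe_rk] at this
  exact_mod_cast this

lemma rk_le_ncard (hX : X ⊆ M.E) : rk M X ≤ X.ncard := by
  have := M.eRk_le_encard X
  rw [← coe_rk, ← (M.ground_finite.subset hX).cast_ncard_eq] at this
  exact_mod_cast this

lemma indep_iff_rk_eq_ncard (hX : X ⊆ M.E) : M.Indep X ↔ rk M X = X.ncard := by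
  rw [indep_iff_eRk_eq_encard, ← coe_rk, ← (M.ground_finite.subset hX).cast_ncard_eq]
  norm_cast

lemma rk_dual_add_rk_ground (hX : X ⊆ M.E) :
    rk M✶ X + rk M M.E = rk M (M.E \ X) + X.ncard := by
  have h := M.eRk_dual_add_eRank X hX
  rw [← eRk_ground, ← coe_rk, ← coe_rk, ← coe_rk,
    ← (M.ground_finite.subset hX).cast_ncard_eq] at h
  exact_mod_cast h

end Rank

section Connectivity

/-- The connectivity function `λ(X) = r(X) + r(E - X) - r(M)`; it is integer-valued so that the
subtraction is not truncated. -/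
noncomputable def connectivity (M : Matroid α) (X : Set α) : ℤ :=
  rk M X + rk M (M.E \ X) - rk M M.E

/-- The absence of 2-separations, expressed by the connectivity function. Unlike `ThreeConn` this
form is visibly invariant under duality. -/
def NoTwoSep (M : Matroid α) : Prop :=
  ∀ X ⊆ M.E, 2 ≤ X.ncard → 2 ≤ (M.E \ X).ncard → 2 ≤ connectivity M X

variable {M : Matroid α} {X T : Set α} {x y z : α} {b : Bool}

lemma connectivity_compl (hX : X ⊆ M.E) : connectivity M (M.E \ X) = connectivity M X := by
  rw [connectivity, connectivity, sdiff_sdiff_cancel_left hX, add_comm (rk M (M.E \ X) : ℤ)]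

variable [M.Finite]

lemma connectivity_eq_rk_add_rk_dual_sub_ncard (hX : X ⊆ M.E) :
    connectivity M X = rk M X + rk M✶ X - X.ncard := by
  have := rk_dual_add_rk_ground hX
  rw [connectivity]
  omega

lemma connectivity_dual (hX : X ⊆ M.E) : connectivity M✶ X = connectivity M X := by
  rw [connectivity_eq_rk_add_rk_dual_sub_ncard hX,
    connectivity_eq_rk_add_rk_dual_sub_ncard (M := M✶) hX, M.dual_dual, add_comm (rk M X : ℤ)]

lemma connectivity_le_ncard (hX : X ⊆ M.E) : connectivity M X ≤ X.ncard := by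
  have := rk_le_ncard hX
  have := rk_le_ncard (M := M✶) hX
  rw [connectivity_eq_rk_add_rk_dual_sub_ncard hX]
  omega

lemma connectivity_insert_le_of_mem_closure (hX : X ⊆ M.E) (hz : z ∈ M.closure X) :
    connectivity M (insert z X) ≤ connectivity M X := by
  by_cases hzX : z ∈ X
  · rw [insert_eq_of_mem hzX]
  have hzE : insert z X ⊆ M.E := insert_subset (M.closure_subset_ground X hz) hX
  have := rk_insert_of_mem_closure hz
  have := rk_insert_le M✶ z X
  have := ncard_insert_of_notMem hzX (M.ground_finite.subset hX)
  rw [connectivity_eq_rk_add_rk_dual_sub_ncard hX, connectivity_eq_rk_add_rk_dual_sub_ncard hzE]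
  omega

lemma connectivity_insert_le_of_triOrTriad (hX : X ⊆ M.E) (h : TriOrTriad M b {x, y, z})
    (hx : x ∈ X) (hy : y ∈ X) : connectivity M (insert z X) ≤ connectivity M X := by
  have of_isTriangle {N : Matroid α} [N.Finite] (hN : X ⊆ N.E) (hT : IsTriangle N {x, y, z}) :
      connectivity N (insert z X) ≤ connectivity N X :=
    connectivity_insert_le_of_mem_closure hN <| mem_closure_of_isCircuit_triple
      ((isCircuit_iff _ _).1 hT.1) (N.subset_closure X hN hx) (N.subset_closure X hN hy)
  cases b with
  | true => exact of_isTriangle hX h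
  | false =>
    have hz : z ∈ M.E := h.1.1.subset_ground (by simp)
    rw [← connectivity_dual hX, ← connectivity_dual (insert_subset hz hX)]
    exact of_isTriangle hX h

lemma ThreeConn.noTwoSep (h : ThreeConn M) : NoTwoSep M := by
  intro X hX hX2 hXc2
  by_contra! hlt
  refine h.2 X (M.E \ X) ⟨union_sdiff_cancel hX, disjoint_sdiff_right, ?_, ?_, ?_⟩
  · rw [← (M.ground_finite.subset hX).cast_ncard_eq]
    exact_mod_cast hX2
  · rw [← (M.ground_finite.subset sdiff_subset).cast_ncard_eq]
    exact_mod_cast hXc2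
  · rw [connectivity] at hlt
    simp only [erk_eq_eRk, ← coe_rk]
    norm_cast
    omega

lemma NoTwoSep.dual (h : NoTwoSep M) : NoTwoSep M✶ := by
  intro X hX hX2 hXc2
  rw [connectivity_dual (show X ⊆ M.E from hX)]
  exact h X hX hX2 hXc2

lemma NoTwoSep.rk_eq_two (h : NoTwoSep M) (h4 : 4 ≤ M.E.ncard) (hX : X ⊆ M.E)
    (hX2 : X.ncard = 2) : rk M X = 2 := by
  have hcompl := ncard_sdiff_add_ncard_of_subset hX M.ground_finite
  have hconn := h X hX (by omega) (by omega)
  have := rk_le_ncard hX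
  have := rk_le_ncard (M := M✶) hX
  rw [connectivity_eq_rk_add_rk_dual_sub_ncard hX] at hconn
  omega

lemma NoTwoSep.two_le_rk (h : NoTwoSep M) (h4 : 4 ≤ M.E.ncard) (hX : X ⊆ M.E)
    (hX2 : 2 ≤ X.ncard) : 2 ≤ rk M X := by
  obtain ⟨Y, hYX, hY⟩ := exists_subset_card_eq hX2
  exact (h.rk_eq_two h4 (hYX.trans hX) hY).symm.trans_le (rk_mono hYX)

lemma NoTwoSep.isTriangle_of_rk_le (h : NoTwoSep M) (h4 : 4 ≤ M.E.ncard) (hT : T ⊆ M.E)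
    (hT3 : T.ncard = 3) (hr : rk M T ≤ 2) : IsTriangle M T := by
  have hTfin := M.ground_finite.subset hT
  refine ⟨(isCircuit_iff M T).2 ?_, by rw [← hTfin.cast_ncard_eq, hT3]; rfl⟩
  rw [isCircuit_iff_dep_forall_sdiff_singleton_indep]
  refine ⟨⟨fun hI => ?_, hT⟩, fun x hx => ?_⟩
  · rw [indep_iff_rk_eq_ncard hT] at hI
    omega
  · have hpair : (T \ {x}).ncard = 2 := by rw [ncard_sdiff_singleton_of_mem hx, hT3]
    have hsub : T \ {x} ⊆ M.E := sdiff_subset.trans hT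
    rw [indep_iff_rk_eq_ncard hsub, hpair, h.rk_eq_two h4 hsub hpair]

lemma NoTwoSep.triOrTriad_of_connectivity_le_two (h : NoTwoSep M) (h4 : 4 ≤ M.E.ncard)
    (hT : T ⊆ M.E) (hT3 : T.ncard = 3) (hconn : connectivity M T ≤ 2) (b : Bool) :
    TriOrTriad M b T ∨ TriOrTriad M (!b) T := by
  have htri : IsTriangle M T ∨ IsTriad M T := by
    rw [connectivity_eq_rk_add_rk_dual_sub_ncard hT] at hconn
    rcases (by omega : rk M T ≤ 2 ∨ rk M✶ T ≤ 2) with hr | hr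
    · exact .inl (h.isTriangle_of_rk_le h4 hT hT3 hr)
    · exact .inr (h.dual.isTriangle_of_rk_le h4 hT hT3 hr)
  cases b
  · exact htri.symm
  · exact htri

lemma NoTwoSep.triOrTriad_of_connectivity_le_one (h : NoTwoSep M) (h4 : 4 ≤ M.E.ncard)
    (hT : T ⊆ M.E) (hT3 : T.ncard = 3) (hconn : connectivity M T ≤ 1) (b : Bool) :
    TriOrTriad M b T := by
  have hr := h.two_le_rk h4 hT (by omega)
  have hr' := h.dual.two_le_rk h4 hT (by omega)
  rw [connectivity_eq_rk_add_rk_dual_sub_ncard hT] at hconn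
  cases b
  · exact h.dual.isTriangle_of_rk_le h4 hT hT3 (by omega)
  · exact h.isTriangle_of_rk_le h4 hT hT3 (by omega)

end Connectivity


section Fan

variable {M : Matroid α} {T T' : Set α} {b : Bool} {m n i : ℕ} {e e' : ℕ → α}

lemma posBool_succ (b : Bool) (i : ℕ) : posBool b (i + 1) = !posBool b i := by
  rcases Nat.mod_two_eq_zero_or_one i with hi | hi <;> simp [posBool, Nat.add_mod, hi]

lemma posBool_two_mul_add_one (b : Bool) (k : ℕ) : posBool b (2 * k + 1) = b := by
  simp [posBool]

lemma ncard_image_Icc_one_le (e : ℕ → α) (n : ℕ) : (e '' Icc 1 n).ncard ≤ n :=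
  (ncard_image_le (finite_Icc 1 n)).trans_eq (by rw [ncard_Icc_nat, Nat.add_sub_cancel])

lemma TriOrTriad.inter_ne_singleton (hT : TriOrTriad M b T) (hT' : TriOrTriad M (!b) T') (x : α) :
    T ∩ T' ≠ {x} := by
  cases b with
  | true =>
    exact ((isCircuit_iff _ _).1 hT.1).inter_isCocircuit_ne_singleton ((isCircuit_iff _ _).1 hT'.1)
  | false =>
    rw [inter_comm]
    exact ((isCircuit_iff _ _).1 hT'.1).inter_isCocircuit_ne_singleton ((isCircuit_iff _ _).1 hT.1)

lemma image_Icc_add_two (e : ℕ → α) (i : ℕ) :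
    e '' Icc i (i + 2) = {e i, e (i + 1), e (i + 2)} := by
  have hIcc : Icc i (i + 2) = {i, i + 1, i + 2} := by
    ext k
    simp only [mem_Icc, mem_insert_iff, mem_singleton_iff]
    omega
  rw [hIcc, image_insert_eq, image_pair]

lemma TriOrTriad.not_triOrTriad_add_two (h : TriOrTriad M b {e i, e (i + 1), e (i + 2)})
    (he : InjOn e (Icc i (i + 4))) :
    ¬ TriOrTriad M (!b) {e (i + 2), e (i + 3), e (i + 4)} := by
  intro h'
  rw [← image_Icc_add_two] at h
  rw [← image_Icc_add_two e (i + 2)] at h'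
  refine h.inter_ne_singleton h' (e (i + 2)) ?_
  rw [← he.image_inter (Icc_subset_Icc_right (by omega)) (Icc_subset_Icc_left (by omega)),
    Icc_inter_Icc, sup_of_le_right (by omega), inf_of_le_left (by omega), Icc_self,
    image_singleton]

namespace IsFanFun

lemma injOn (hf : IsFanFun M b n e) : InjOn e (Icc 1 n) :=
  fun i hi j hj => hf.2.1 i j hi.1 hi.2 hj.1 hj.2

lemma image_subset_ground (hf : IsFanFun M b n e) : e '' Icc 1 n ⊆ M.E :=
  image_subset_iff.2 fun i hi => hf.2.2.1 i hi.1 hi.2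

lemma triOrTriad (hf : IsFanFun M b n e) (hi : 1 ≤ i) (hin : i + 2 ≤ n) :
    TriOrTriad M (posBool b i) {e i, e (i + 1), e (i + 2)} :=
  hf.2.2.2 i hi hin

lemma ncard_image (hf : IsFanFun M b n e) : (e '' Icc 1 n).ncard = n := by
  rw [hf.injOn.ncard_image, ncard_Icc_nat, Nat.add_sub_cancel]

lemma le_ncard_ground [M.Finite] (hf : IsFanFun M b n e) : n ≤ M.E.ncard :=
  hf.ncard_image.symm.trans_le (ncard_le_ncard hf.image_subset_ground M.ground_finite)

lemma image_eq_ground [M.Finite] (hf : IsFanFun M b n e) (hn : M.E.ncard = n) :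
    e '' Icc 1 n = M.E :=
  eq_of_subset_of_ncard_le hf.image_subset_ground (hn.trans hf.ncard_image.symm).le
    M.ground_finite

lemma congr (hf : IsFanFun M b n e) (h : EqOn e e' (Icc 1 n)) : IsFanFun M b n e' := by
  refine ⟨hf.1, fun i j hi hin hj hjn hij => ?_, fun i hi hin => ?_, fun i hi hin => ?_⟩
  · rw [← h ⟨hi, hin⟩, ← h ⟨hj, hjn⟩] at hij
    exact hf.2.1 i j hi hin hj hjn hij
  · exact h ⟨hi, hin⟩ ▸ hf.2.2.1 i hi hin
  · rw [← h ⟨hi, by omega⟩, ← h ⟨by omega, by omega⟩, ← h ⟨by omega, hin⟩]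
    exact hf.triOrTriad hi hin

lemma tail (hf : IsFanFun M b (n + 1) e) (hn : 3 ≤ n) :
    IsFanFun M (!b) n (fun i => e (i + 1)) := by
  refine ⟨hn, fun i j _ hin _ hjn hij => ?_, fun i _ hin => ?_, fun i _ hin => ?_⟩
  · have := hf.injOn ⟨by omega, by omega⟩ ⟨by omega, by omega⟩ hij
    omega
  · exact hf.2.2.1 (i + 1) (by omega) (by omega)
  · have hpos : posBool (!b) i = posBool b (i + 1) := by
      rw [posBool_succ]
      rcases Nat.mod_two_eq_zero_or_one i with hi | hi <;> simp [posBool, hi]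
    rw [hpos]
    exact hf.triOrTriad (by omega) (by omega)

lemma connectivity_image_Icc_le [M.Finite] (hf : IsFanFun M b n e) (hm : m + 2 ≤ n) :
    connectivity M (e '' Icc 1 (m + 2)) ≤ 2 := by
  have hsub {k : ℕ} (hk : k ≤ n) : e '' Icc 1 k ⊆ M.E :=
    (image_mono (Icc_subset_Icc_right hk)).trans hf.image_subset_ground
  induction m with
  | zero =>
    refine (connectivity_le_ncard (hsub hm)).trans ?_
    exact_mod_cast ncard_image_Icc_one_le e 2
  | succ m ih =>
    have hinsert : e '' Icc 1 (m + 1 + 2) = insert (e (m + 1 + 2)) (e '' Icc 1 (m + 2)) := by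
      rw [← image_insert_eq]
      exact congrArg (e '' ·) (insert_Icc_right_eq_Icc_add_one (by omega)).symm
    rw [hinsert]
    exact (connectivity_insert_le_of_triOrTriad (hsub (by omega))
      (hf.triOrTriad (i := m + 1) (by omega) hm) (mem_image_of_mem e ⟨by omega, by omega⟩)
      (mem_image_of_mem e ⟨by omega, by omega⟩)).trans (ih (by omega))

lemma triOrTriad_last [M.Finite] (h : NoTwoSep M) (hf : IsFanFun M b n e)
    (hcard : M.E.ncard = n + 1) (he : InjOn e (Icc 1 (n + 1)))
    (hE : e '' Icc 1 (n + 1) = M.E) :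
    TriOrTriad M (posBool b (n - 1)) {e (n - 1), e n, e (n + 1)} := by
  obtain ⟨m, rfl⟩ := Nat.exists_eq_add_of_le' hf.1
  have hsub : Icc (m + 2) (m + 4) ⊆ Icc 1 (m + 4) := Icc_subset_Icc_left (by omega)
  have hT : e '' Icc (m + 2) (m + 4) ⊆ M.E := hE ▸ image_mono hsub
  have hT3 : (e '' Icc (m + 2) (m + 4)).ncard = 3 := by
    rw [(he.mono hsub).ncard_image, ncard_Icc_nat]
    omega
  have hcompl : M.E \ e '' Icc (m + 2) (m + 4) = e '' Icc 1 (m + 1) := by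
    rw [← hE, ← he.image_sdiff_subset hsub]
    congr 1
    ext k
    simp only [mem_sdiff, mem_Icc]
    omega
  have hTeq := image_Icc_add_two e (m + 2)
  have hconn := connectivity_compl hT
  rw [hcompl] at hconn
  change TriOrTriad M (posBool b (m + 2)) {e (m + 2), e (m + 2 + 1), e (m + 2 + 2)}
  rw [← hTeq]
  rcases m with - | m
  · refine h.triOrTriad_of_connectivity_le_one (by omega) hT hT3 ?_ _
    refine hconn.symm.trans_le ((connectivity_le_ncard (hcompl ▸ sdiff_subset)).trans ?_)
    exact_mod_cast ncard_image_Icc_one_le e 1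
  · refine (h.triOrTriad_of_connectivity_le_two (by omega) hT hT3 ?_ _).resolve_right ?_
    · exact hconn.symm.trans_le (hf.connectivity_image_Icc_le (by omega))
    · rw [hTeq, posBool_succ, posBool_succ, Bool.not_not]
      exact (hf.triOrTriad (i := m + 1) (by omega) (by omega)).not_triOrTriad_add_two
        (he.mono (Icc_subset_Icc (by omega) (by omega)))

lemma extend [M.Finite] (h : NoTwoSep M) (hf : IsFanFun M b n e) (hcard : M.E.ncard = n + 1)
    (hE : e '' Icc 1 (n + 1) = M.E) : IsFanFun M b (n + 1) e := by
  have he : InjOn e (Icc 1 (n + 1)) :=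
    injOn_of_ncard_image_eq (by rw [hE, hcard, ncard_Icc_nat, Nat.add_sub_cancel])
  refine ⟨hf.1.trans n.le_succ, fun i j hi hin hj hjn => (he ⟨hi, hin⟩ ⟨hj, hjn⟩ ·),
    fun i hi hin => hE ▸ mem_image_of_mem e ⟨hi, hin⟩, fun i hi hin => ?_⟩
  rcases hin.lt_or_eq with hlt | heq
  · exact hf.triOrTriad hi (by omega)
  · obtain ⟨m, rfl⟩ := Nat.exists_eq_add_of_le' hf.1
    obtain rfl : i = m + 2 := by omega
    exact hf.triOrTriad_last h hcard he hE

lemma exists_extend [M.Finite] (h : NoTwoSep M) (hf : IsFanFun M b n e)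
    (hcard : M.E.ncard = n + 1) : ∃ e', IsFanFun M b (n + 1) e' := by
  obtain ⟨a, ha⟩ : ∃ a, insert a (e '' Icc 1 n) = M.E := by
    obtain ⟨a, haE, ha⟩ := exists_mem_notMem_of_ncard_lt_ncard
      (by rw [hf.ncard_image, hcard]; omega : (e '' Icc 1 n).ncard < M.E.ncard)
      (finite_Icc 1 n |>.image e)
    refine ⟨a, eq_of_subset_of_ncard_le (insert_subset haE hf.image_subset_ground) ?_
      M.ground_finite⟩
    rw [ncard_insert_of_notMem ha ((finite_Icc 1 n).image e), hf.ncard_image, hcard]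
  have heq : EqOn e (Function.update e (n + 1) a) (Icc 1 n) := fun i hi =>
    (Function.update_of_ne (by have := hi.2; omega) _ _).symm
  refine ⟨_, (hf.congr heq).extend h hcard ?_⟩
  rw [← insert_Icc_right_eq_Icc_add_one (by omega : 1 ≤ n + 1), image_insert_eq, ← heq.image_eq,
    Function.update_self, ha]

lemma rotate [M.Finite] (h : NoTwoSep M) (hf : IsFanFun M b n e) (hcard : M.E.ncard = n)
    (h4 : 4 ≤ n) (hclosed : e (n + 1) = e 1) : IsFanFun M (!b) n (fun i => e (i + 1)) := by
  obtain ⟨n, rfl⟩ := Nat.exists_eq_add_of_le' (by omega : 1 ≤ n)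
  refine (hf.tail (by omega)).extend h hcard ?_
  have hshift : (fun i => e (i + 1)) '' Icc 1 (n + 1) = e '' Icc 2 (n + 1 + 1) := by
    rw [← image_image e (· + 1), image_add_const_Icc]
  rw [hshift, ← hf.image_eq_ground hcard,
    ← insert_Icc_right_eq_Icc_add_one (by omega : 2 ≤ n + 1 + 1),
    ← insert_Icc_add_one_left_eq_Icc (by omega : 1 ≤ n + 1), image_insert_eq, image_insert_eq,
    hclosed, one_add_one_eq_two]

lemma shift [M.Finite] (h : NoTwoSep M) (hf : IsFanFun M b n e) (hcard : M.E.ncard = n)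
    (h4 : 4 ≤ n) (hper : Function.Periodic e n) (k : ℕ) :
    IsFanFun M (posBool b (k + 1)) n (fun i => e (i + k)) := by
  induction k with
  | zero => exact hf
  | succ k ih =>
    rw [posBool_succ]
    have hclosed : e (n + 1 + k) = e (1 + k) := by
      rw [add_assoc, add_comm n, hper]
    simpa only [add_right_comm _ 1 k, add_assoc] using ih.rotate h hcard h4 hclosed

lemma triOrTriad_of_periodic [M.Finite] (h : NoTwoSep M) (hf : IsFanFun M b n e)
    (hcard : M.E.ncard = n) (h4 : 4 ≤ n) (hper : Function.Periodic e n) (k : ℕ) :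
    TriOrTriad M (posBool b (k + 1)) {e (k + 1), e (k + 2), e (k + 3)} := by
  have hT : TriOrTriad M (posBool b (k + 1)) {e (1 + k), e (2 + k), e (3 + k)} :=
    (hf.shift h hcard h4 hper k).triOrTriad le_rfl (by omega)
  simpa only [add_comm _ k] using hT

lemma even_length [M.Finite] (h : NoTwoSep M) (hf : IsFanFun M b n e) (hcard : M.E.ncard = n)
    (h4 : 4 ≤ n) (hper : Function.Periodic e n) : Even n := by
  by_contra hodd
  have hmod : n % 2 = 1 := Nat.not_even_iff.1 hodd
  have hfirst := hf.triOrTriad_of_periodic h hcard h4 hper n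
  have hb : posBool b (n + 1) = !b := by simp [posBool, Nat.add_mod, hmod]
  rw [hb, add_comm n, add_comm n, add_comm n, hper, hper, hper] at hfirst
  refine hfirst.not_triOrTriad_add_two (hf.injOn.mono (Icc_subset_Icc_right (by omega))) ?_
  rw [Bool.not_not]
  exact hf.triOrTriad (i := 3) (by omega) (by omega)

lemma exists_periodic (hf : IsFanFun M b n e) :
    ∃ e', Function.Periodic e' n ∧ IsFanFun M b n e' := by
  have hn := hf.1
  refine ⟨fun k => e ((k + n - 1) % n + 1), fun k => ?_, hf.congr fun k hk => ?_⟩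
  · have : k + n + n - 1 = k + n - 1 + n := by omega
    simp only [this, Nat.add_mod_right]
  · have : k + n - 1 = k - 1 + n := by have := hk.1; omega
    have hlt : k - 1 < n := by have := hk.2; omega
    simp only [this, Nat.add_mod_right, Nat.mod_eq_of_lt hlt, Nat.sub_add_cancel hk.1]

lemma exists_periodic_true [M.Finite] (h : NoTwoSep M) (hf : IsFanFun M b n e)
    (hcard : M.E.ncard = n) (h4 : 4 ≤ n) :
    ∃ e', Function.Periodic e' n ∧ IsFanFun M true n e' := by
  obtain ⟨e', hper, hf'⟩ := hf.exists_periodic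
  cases b with
  | true => exact ⟨e', hper, hf'⟩
  | false =>
    refine ⟨fun i => e' (i + 1), fun i => ?_, hf'.shift h hcard h4 hper 1⟩
    simp only [add_right_comm i n 1, hper (i + 1)]

end IsFanFun

end Fan

section CyclicFan

/-- The ground set of `M` is arranged in a cycle `s 0, w 0, s 1, w 1, ...` of distinct elements
whose consecutive triples are alternately triangles and triads: a fan closed up, with spokes `s`
and rim elements `w`. -/
structure IsCyclicFan (M : Matroid α) {r : ℕ} (s w : ZMod r → α) : Prop where
  injective : Function.Injective (Sum.elim s w)
  ground_eq : M.E = range s ∪ range w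
  isCircuit_triangle (i : ZMod r) : M.IsCircuit {s i, w i, s (i + 1)}
  isCocircuit_triad (i : ZMod r) : M.IsCocircuit {w i, s (i + 1), w (i + 1)}

lemma right_notMem_cycArc {r : ℕ} (i j : ZMod r) : j ∉ cycArc r i j := by
  rintro ⟨m, hm, hj⟩
  rw [sub_eq_of_eq_add' hj, ZMod.val_natCast] at hm
  exact hm.not_ge (Nat.mod_le m r)

lemma left_mem_cycArc {r : ℕ} {i j : ZMod r} (h : i ≠ j) : i ∈ cycArc r i j := by
  refine ⟨0, Nat.pos_of_ne_zero fun h0 => h ?_, by rw [Nat.cast_zero, add_zero]⟩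
  exact (sub_eq_zero.1 ((ZMod.val_eq_zero _).1 h0)).symm

lemma exists_cycArc_subset {r : ℕ} [NeZero r] {S : Set (ZMod r)} {i a : ZMod r} (hi : i ∈ S)
    (ha : a ∉ S) : ∃ j ∉ S, j - 1 ∈ S ∧ cycArc r i j ⊆ S := by
  classical
  have hex : ∃ m : ℕ, i + (m : ZMod r) ∉ S := ⟨(a - i).val, by simpa using ha⟩
  have hpos : Nat.find hex ≠ 0 := fun h0 => Nat.find_spec hex (by simpa [h0] using hi)
  refine ⟨i + (Nat.find hex : ZMod r), Nat.find_spec hex, ?_, ?_⟩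
  · have := Nat.find_min hex (Nat.sub_one_lt hpos)
    rwa [not_not, Nat.cast_pred (Nat.pos_of_ne_zero hpos), ← add_sub_assoc] at this
  · rintro _ ⟨t, ht, rfl⟩
    rw [add_sub_cancel_left, ZMod.val_natCast] at ht
    exact not_not.1 (Nat.find_min hex (ht.trans_le (Nat.mod_le _ _)))

lemma mem_or_mem_of_isCocircuit_triple {M : Matroid α} {C : Set α} {x y z : α}
    (hC : M.IsCircuit C) (hK : M.IsCocircuit {x, y, z}) (hx : x ∈ C) : y ∈ C ∨ z ∈ C := by
  by_contra! hyz
  refine hC.inter_isCocircuit_ne_singleton hK (e := x) (Subset.antisymm ?_ (by simp [hx]))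
  rintro a ⟨haC, rfl | rfl | rfl⟩
  exacts [rfl, absurd haC hyz.1, absurd haC hyz.2]

namespace IsCyclicFan

variable {M : Matroid α} {r : ℕ} {s w : ZMod r → α} {C : Set α} {i j : ZMod r}

lemma isCocircuit_triad_sub_one (h : IsCyclicFan M s w) (i : ZMod r) :
    M.IsCocircuit {w (i - 1), s i, w i} := by
  simpa only [sub_add_cancel] using h.isCocircuit_triad (i - 1)

lemma spoke_injective (h : IsCyclicFan M s w) : Function.Injective s :=
  (Sum.elim_injective.1 h.injective).1

lemma rim_injective (h : IsCyclicFan M s w) : Function.Injective w :=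
  (Sum.elim_injective.1 h.injective).2.1

lemma spoke_notMem_range_rim (h : IsCyclicFan M s w) (i : ZMod r) : s i ∉ range w :=
  fun ⟨k, hk⟩ => (Sum.elim_injective.1 h.injective).2.2 i k hk.symm

lemma spokes_subset_ground (h : IsCyclicFan M s w) : range s ⊆ M.E :=
  h.ground_eq ▸ subset_union_left

lemma rim_subset_ground (h : IsCyclicFan M s w) : range w ⊆ M.E :=
  h.ground_eq ▸ subset_union_right

lemma rim_mem_or_rim_mem_of_spoke_mem (h : IsCyclicFan M s w) (hC : M.IsCircuit C)
    (hi : s i ∈ C) : w (i - 1) ∈ C ∨ w i ∈ C :=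
  mem_or_mem_of_isCocircuit_triple hC (insert_comm _ _ _ ▸ h.isCocircuit_triad_sub_one i) hi

lemma rim_mem_iff_of_spoke_notMem (h : IsCyclicFan M s w) (hC : M.IsCircuit C)
    (hi : s i ∉ C) : w (i - 1) ∈ C ↔ w i ∈ C := by
  have hK := h.isCocircuit_triad_sub_one i
  constructor
  · exact fun hw => (mem_or_mem_of_isCocircuit_triple hC hK hw).resolve_left hi
  · rw [insert_comm, pair_comm, insert_comm] at hK
    exact fun hw => (mem_or_mem_of_isCocircuit_triple hC hK hw).resolve_left hi

lemma exists_rim_mem (h : IsCyclicFan M s w) (hC : M.IsCircuit C) : ∃ i, w i ∈ C := by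
  obtain ⟨x, hx⟩ := hC.nonempty
  rcases h.ground_eq ▸ hC.subset_ground hx with ⟨i, rfl⟩ | ⟨i, rfl⟩
  · exact (h.rim_mem_or_rim_mem_of_spoke_mem hC hx).elim (⟨_, ·⟩) (⟨_, ·⟩)
  · exact ⟨i, hx⟩

lemma exists_arc_subset_or_rim_subset [NeZero r] (h : IsCyclicFan M s w) (hC : M.IsCircuit C) :
    (∃ i j, i ≠ j ∧ {s i, s j} ∪ w '' cycArc r i j ⊆ C) ∨
      (range w ⊆ C ∧ (s ⁻¹' C).Subsingleton) := by
  have hunion {i j : ZMod r} (hi : s i ∈ C) (hj : s j ∈ C) (harc : cycArc r i j ⊆ w ⁻¹' C) :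
      {s i, s j} ∪ w '' cycArc r i j ⊆ C :=
    union_subset (insert_subset hi (singleton_subset_iff.2 hj)) (image_subset_iff.2 harc)
  by_cases hrim : range w ⊆ C
  · refine or_iff_not_imp_right.2 fun hspokes => ?_
    obtain ⟨i, hi, j, hj, hij⟩ := not_subsingleton_iff.1 fun hsub => hspokes ⟨hrim, hsub⟩
    exact ⟨i, j, hij, hunion hi hj fun k _ => hrim (mem_range_self k)⟩
  · left
    obtain ⟨_, ⟨a, rfl⟩, ha⟩ := not_subset.1 hrim
    obtain ⟨k, hk⟩ := h.exists_rim_mem hC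
    obtain ⟨i, hi, hi', -⟩ := exists_cycArc_subset (S := (w ⁻¹' C)ᶜ) ha (not_not.2 hk)
    rw [notMem_compl_iff] at hi
    obtain ⟨j, hj, hj', harc⟩ := exists_cycArc_subset hi ha
    refine ⟨i, j, ne_of_mem_of_not_mem hi hj, hunion ?_ ?_ harc⟩ <;> by_contra hspoke
    · exact hi' ((h.rim_mem_iff_of_spoke_notMem hC hspoke).2 hi)
    · exact hj ((h.rim_mem_iff_of_spoke_notMem hC hspoke).1 hj')

lemma spoke_mem_closure_insert_arc [NeZero r] (h : IsCyclicFan M s w) (i j : ZMod r) :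
    s j ∈ M.closure (insert (s i) (w '' cycArc r i j)) := by
  have hsub : insert (s i) (w '' cycArc r i j) ⊆ M.E :=
    insert_subset (h.spokes_subset_ground (mem_range_self i))
      ((image_subset_range _ _).trans h.rim_subset_ground)
  have hstep : ∀ m ≤ (j - i).val,
      s (i + (m : ZMod r)) ∈ M.closure (insert (s i) (w '' cycArc r i j)) := by
    intro m hm
    induction m with
    | zero => simpa using M.mem_closure_of_mem (mem_insert _ _) hsub
    | succ m ih =>
      rw [Nat.cast_succ, ← add_assoc]
      exact mem_closure_of_isCircuit_triple (h.isCircuit_triangle _) (ih (by omega))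
        (M.mem_closure_of_mem (mem_insert_of_mem _ (mem_image_of_mem w ⟨m, by omega, rfl⟩)) hsub)
  simpa using hstep _ le_rfl

lemma isCircuit_arc [NeZero r] (h : IsCyclicFan M s w) (hij : i ≠ j) :
    M.IsCircuit ({s i, s j} ∪ w '' cycArc r i j) := by
  have hj : s j ∉ insert (s i) (w '' cycArc r i j) := by
    rintro (hji | hjw)
    · exact hij (h.spoke_injective hji).symm
    · exact h.spoke_notMem_range_rim j (image_subset_range _ _ hjw)
  obtain ⟨C, hCsub, hC, -⟩ :=
    exists_isCircuit_of_mem_closure (h.spoke_mem_closure_insert_arc i j) hj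
  have harc : insert (s j) (insert (s i) (w '' cycArc r i j)) = {s i, s j} ∪ w '' cycArc r i j := by
    rw [insert_comm, insert_union, singleton_union]
  rw [harc] at hCsub
  have hspoke {a : ZMod r} (ha : s a ∈ C) : a = i ∨ a = j :=
    (hCsub ha).elim (Or.imp (h.spoke_injective ·) (h.spoke_injective ·))
      fun haw => absurd (image_subset_range _ _ haw) (h.spoke_notMem_range_rim a)
  have hwj : w j ∉ C := by
    intro hw
    rcases hCsub hw with (hi | hj) | hk
    · exact h.spoke_notMem_range_rim i ⟨j, hi⟩
    · exact h.spoke_notMem_range_rim j ⟨j, hj⟩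
    · exact right_notMem_cycArc i j ((h.rim_injective.mem_set_image).1 hk)
  rcases h.exists_arc_subset_or_rim_subset hC with ⟨a, c, hac, hsub⟩ | ⟨hrim, -⟩
  · have hc := hspoke (hsub (by simp : s c ∈ _))
    rcases hspoke (hsub (by simp : s a ∈ _)) with rfl | rfl
    · obtain rfl := hc.resolve_left hac.symm
      rwa [← hCsub.antisymm hsub]
    · exact absurd (hsub (.inr ⟨a, left_mem_cycArc hac, rfl⟩)) hwj
  · exact absurd (hrim (mem_range_self j)) hwj

lemma circuit_cases [NeZero r] (h : IsCyclicFan M s w) (hC : M.IsCircuit C) :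
    (∃ i j, i ≠ j ∧ C = {s i, s j} ∪ w '' cycArc r i j) ∨
      C = range w ∨ ∃ i, C = insert (s i) (range w) := by
  refine (h.exists_arc_subset_or_rim_subset hC).imp ?_ ?_
  · rintro ⟨i, j, hij, hsub⟩
    exact ⟨i, j, hij, hC.eq_of_superset_isCircuit (h.isCircuit_arc hij) hsub⟩
  · rintro ⟨hrim, hspokes⟩
    have hCeq : C = s '' (s ⁻¹' C) ∪ range w := by
      rw [image_preimage_eq_inter_range]
      refine Subset.antisymm (fun x hx => ?_) (union_subset inter_subset_left hrim)
      exact (h.ground_eq ▸ hC.subset_ground hx).imp_left (⟨hx, ·⟩)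
    rcases hspokes.eq_empty_or_singleton with hs | ⟨i, hs⟩
    · left
      rwa [hs, image_empty, empty_union] at hCeq
    · refine .inr ⟨i, ?_⟩
      rwa [hs, image_singleton, singleton_union] at hCeq

lemma circuit_cases_of_subset_insert_rim [NeZero r] (h : IsCyclicFan M s w) (hC : M.IsCircuit C)
    (hsub : C ⊆ insert (s i) (range w)) : C = range w ∨ C = insert (s i) (range w) := by
  have hspoke {a : ZMod r} (ha : s a ∈ C) : a = i :=
    h.spoke_injective ((hsub ha).resolve_right (h.spoke_notMem_range_rim a))
  rcases h.circuit_cases hC with ⟨a, c, hac, rfl⟩ | hrim | ⟨a, rfl⟩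
  · exact absurd ((hspoke (by simp)).trans (hspoke (by simp)).symm) hac
  · exact .inl hrim
  · rw [hspoke (mem_insert _ _)]
    exact .inr rfl

lemma isCircuit_rim [NeZero r] (h : IsCyclicFan M s w) (hrim : ¬ M.Indep (range w)) :
    M.IsCircuit (range w) := by
  obtain ⟨C, hCsub, hC⟩ := Dep.exists_isCircuit_subset ⟨hrim, h.rim_subset_ground⟩
  rcases h.circuit_cases_of_subset_insert_rim (i := 0) hC (hCsub.trans (subset_insert _ _)) with
    rfl | rfl
  · exact hC
  · exact absurd (hCsub (mem_insert _ _)) (h.spoke_notMem_range_rim 0)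

lemma spanning_spokes (h : IsCyclicFan M s w) : M.Spanning (range s) := by
  rw [spanning_iff_ground_subset_closure h.spokes_subset_ground]
  have hspoke (i : ZMod r) : s i ∈ M.closure (range s) :=
    M.mem_closure_of_mem (mem_range_self i) h.spokes_subset_ground
  intro x hx
  rcases h.ground_eq ▸ hx with ⟨i, rfl⟩ | ⟨i, rfl⟩
  · exact hspoke i
  · have hT := h.isCircuit_triangle i
    rw [pair_comm] at hT
    exact mem_closure_of_isCircuit_triple hT (hspoke i) (hspoke (i + 1))

lemma isCircuit_insert_rim [NeZero r] (h : IsCyclicFan M s w) (hrim : M.Indep (range w))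
    (i : ZMod r) : M.IsCircuit (insert (s i) (range w)) := by
  have hcard {f : ZMod r → α} (hf : Function.Injective f) : (range f).encard = r := by
    rw [← image_univ, hf.encard_image, encard_univ, ENat.card_eq_coe_fintype_card, ZMod.card]
  have hdep : M.Dep (insert (s i) (range w)) := by
    refine ⟨fun hI => ?_, insert_subset (h.spokes_subset_ground ⟨i, rfl⟩) h.rim_subset_ground⟩
    have hle := calc
      (insert (s i) (range w)).encard ≤ M.eRank := hI.encard_le_eRank
      _ = M.eRk (range s) := h.spanning_spokes.eRk_eq.symm
      _ ≤ (range s).encard := M.eRk_le_encard _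
    rw [encard_insert_of_notMem (h.spoke_notMem_range_rim i), hcard h.rim_injective,
      hcard h.spoke_injective] at hle
    norm_cast at hle
    omega
  obtain ⟨C, hCsub, hC⟩ := hdep.exists_isCircuit_subset
  rcases h.circuit_cases_of_subset_insert_rim hC hCsub with rfl | rfl
  · exact absurd hrim hC.not_indep
  · exact hC

lemma isWheel (h : IsCyclicFan M s w) (hr : 2 ≤ r) (hrim : ¬ M.Indep (range w)) : IsWheel M := by
  have : NeZero r := ⟨by omega⟩
  refine ⟨r, hr, s, w, h.injective, h.ground_eq, fun C => ?_⟩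
  rw [isCircuit_iff]
  constructor
  · intro hC
    rcases h.circuit_cases hC with harc | rfl | ⟨i, rfl⟩
    · exact .inr harc
    · exact .inl rfl
    · have heq := hC.eq_of_superset_isCircuit (h.isCircuit_rim hrim) (subset_insert _ _)
      exact absurd (heq ▸ mem_insert _ _) (h.spoke_notMem_range_rim i)
  · rintro (rfl | ⟨i, j, hij, rfl⟩)
    exacts [h.isCircuit_rim hrim, h.isCircuit_arc hij]

lemma isWhirl (h : IsCyclicFan M s w) (hr : 2 ≤ r) (hrim : M.Indep (range w)) : IsWhirl M := by
  have : NeZero r := ⟨by omega⟩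
  refine ⟨r, hr, s, w, h.injective, h.ground_eq, fun C => ?_⟩
  rw [isCircuit_iff]
  constructor
  · intro hC
    rcases h.circuit_cases hC with harc | rfl | hinsert
    · exact .inr harc
    · exact absurd hrim hC.not_indep
    · exact .inl hinsert
  · rintro (⟨i, rfl⟩ | ⟨i, j, hij, rfl⟩)
    exacts [h.isCircuit_insert_rim hrim i, h.isCircuit_arc hij]

lemma isWheel_or_isWhirl (h : IsCyclicFan M s w) (hr : 2 ≤ r) : IsWheel M ∨ IsWhirl M :=
  (em (M.Indep (range w))).symm.imp (h.isWheel hr) (h.isWhirl hr)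

end IsCyclicFan

lemma periodic_apply_val_add_one {r : ℕ} [NeZero r] {f : ℕ → α} (hf : Function.Periodic f r)
    (i : ZMod r) : f (i + 1).val = f (i.val + 1) := by
  rw [ZMod.val_add, ZMod.val_one_eq_one_mod, Nat.add_mod_mod, hf.map_mod_nat]

lemma injective_sumElim_of_injOn {r : ℕ} [NeZero r] {e : ℕ → α} (he : InjOn e (Icc 1 (2 * r))) :
    Function.Injective (Sum.elim (fun i : ZMod r => e (2 * i.val + 1))
      (fun i : ZMod r => e (2 * i.val + 2))) := by
  have hpos (i : ZMod r) {c : ℕ} (hc1 : 1 ≤ c) (hc2 : c ≤ 2) : 2 * i.val + c ∈ Icc 1 (2 * r) := by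
    have := i.val_lt
    exact ⟨by omega, by omega⟩
  refine Sum.elim_injective.2 ⟨fun i j hij => ?_, fun i j hij => ?_, fun i j hij => ?_⟩
  · have := he (hpos i le_rfl one_le_two) (hpos j le_rfl one_le_two) hij
    exact ZMod.val_injective r (by omega)
  · have := he (hpos i one_le_two le_rfl) (hpos j one_le_two le_rfl) hij
    exact ZMod.val_injective r (by omega)
  · have := he (hpos i le_rfl one_le_two) (hpos j one_le_two le_rfl) hij
    omega

lemma image_Icc_one_two_mul (r : ℕ) [NeZero r] (e : ℕ → α) :
    e '' Icc 1 (2 * r) = range (fun i : ZMod r => e (2 * i.val + 1)) ∪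
      range (fun i : ZMod r => e (2 * i.val + 2)) := by
  refine Subset.antisymm ?_ (union_subset ?_ ?_)
  · rintro _ ⟨k, ⟨hk1, hk2⟩, rfl⟩
    rcases Nat.even_or_odd' k with ⟨m, rfl | rfl⟩
    · have hval := ZMod.val_natCast_of_lt (by omega : m - 1 < r)
      exact .inr ⟨(m - 1 : ℕ), by simp only [hval]; congr 1; omega⟩
    · have hval := ZMod.val_natCast_of_lt (by omega : m < r)
      exact .inl ⟨(m : ℕ), by simp only [hval]⟩
  all_goals
    refine range_subset_iff.2 fun i => mem_image_of_mem e ?_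
    have := i.val_lt
    exact ⟨by omega, by omega⟩

lemma IsFanFun.isCyclicFan {M : Matroid α} [M.Finite] {r : ℕ} {e : ℕ → α} (h : NoTwoSep M)
    (hf : IsFanFun M true (2 * r) e) (hcard : M.E.ncard = 2 * r) (h4 : 4 ≤ 2 * r)
    (hper : Function.Periodic e (2 * r)) :
    IsCyclicFan M (fun i : ZMod r => e (2 * i.val + 1)) (fun i => e (2 * i.val + 2)) := by
  have : NeZero r := ⟨by omega⟩
  have hodd : Function.Periodic (fun m => e (2 * m + 1)) r := fun m => by
    simp only [mul_add, add_right_comm _ (2 * r) 1, hper (2 * m + 1)]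
  have heven : Function.Periodic (fun m => e (2 * m + 2)) r := fun m => by
    simp only [mul_add, add_right_comm _ (2 * r) 2, hper (2 * m + 2)]
  have htriple (k : ℕ) := hf.triOrTriad_of_periodic h hcard h4 hper k
  refine ⟨injective_sumElim_of_injOn hf.injOn,
    (hf.image_eq_ground hcard).symm.trans (image_Icc_one_two_mul r e), fun i => ?_, fun i => ?_⟩
  · have hT := htriple (2 * i.val)
    rw [posBool_two_mul_add_one] at hT
    rw [periodic_apply_val_add_one hodd]
    exact (isCircuit_iff _ _).1 hT.1
  · have hT := htriple (2 * i.val + 1)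
    rw [posBool_succ, posBool_two_mul_add_one] at hT
    rw [periodic_apply_val_add_one hodd, periodic_apply_val_add_one heven]
    exact (isCircuit_iff _ _).1 hT.1

end CyclicFan

end PaperDefs

/-- A 3-connected matroid with at least four elements that has a fan containing all
but at most one of its elements is a wheel or a whirl. -/
theorem statement11 (M : Matroid α) (hM3 : ThreeConn M) (b : Bool) (n : ℕ) (e : ℕ → α)
    (hfan : IsFanFun M b n e) (h4 : 4 ≤ M.E.encard)
    (hle : M.E.encard ≤ (n : ℕ∞) + 1) :
    IsWheel M ∨ IsWhirl M := by
  have : M.Finite := ⟨finite_of_encard_le_coe (k := n + 1) (by exact_mod_cast hle)⟩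
  rw [← M.ground_finite.cast_ncard_eq] at h4 hle
  norm_cast at h4 hle
  have hsep := hM3.noTwoSep
  obtain ⟨n, e, hfan, hn⟩ : ∃ n e, IsFanFun M b n e ∧ M.E.ncard = n := by
    rcases hfan.le_ncard_ground.eq_or_lt with heq | hlt
    · exact ⟨n, e, hfan, heq.symm⟩
    · have hcard : M.E.ncard = n + 1 := by omega
      obtain ⟨e', hfan'⟩ := hfan.exists_extend hsep hcard
      exact ⟨n + 1, e', hfan', hcard⟩
  rw [hn] at h4
  obtain ⟨e, hper, hfan⟩ := hfan.exists_periodic_true hsep hn h4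
  obtain ⟨r, rfl⟩ := even_iff_exists_two_mul.1 (hfan.even_length hsep hn h4 hper)
  exact (hfan.isCyclicFan hsep hn h4 hper).isWheel_or_isWhirl (by omega)
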